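/- Let A be an ω×ω monic segmented first entries matrix with entries from ω, let r ∈ ℕ, and let ℕ = E_1 ∪ … ∪ E_r. Then there exist i ∈ {1,…,r} and vectors x, y ∈ ℕ^ω such that all entries of Ax and all entries of y^A lie in E_i. -/

import Mathlib

/- `ℕ+` plays the role of the paper's `ℕ = {1,2,3,…}`.  `Ultrafilter ℕ+` is `βℕ`. -/

/-- Product of ultrafilters: `U ∈ umul p q ↔ {x | {y | x*y ∈ U} ∈ q} ∈ p`. -/
def umul (p q : Ultrafilter ℕ+) : Ultrafilter ℕ+ :=
  p.bind fun x => q.map fun y => x * y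

/-- Sum of ultrafilters: `U ∈ uadd p q ↔ {x | {y | x+y ∈ U} ∈ q} ∈ p`. -/
def uadd (p q : Ultrafilter ℕ+) : Ultrafilter ℕ+ :=
  p.bind fun x => q.map fun y => x + y

/-- The matrix-vector product `Ax` (computed in `ℚ`) of a row-finite matrix `A`
with a vector `x` of positive integers. -/
noncomputable def mulVecQ {ι κ : Type} (A : ι → κ → ℚ) (x : κ → ℕ+) : ι → ℚ :=
  fun i => ∑ᶠ j, A i j * ((x j : ℕ) : ℚ)

/-- All entries of the vector `y` are (positive) natural numbers lying in `P`. -/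
def entriesIn {ι : Type} (y : ι → ℚ) (P : Set ℕ+) : Prop :=
  ∀ i, ∃ n ∈ P, y i = ((n : ℕ) : ℚ)

/-- `A` is image partition regular: for every finite coloring of `ℕ` there is
a vector `x` over `ℕ` all entries of whose image `Ax` are monochromatic. -/
def IPR {ι κ : Type} (A : ι → κ → ℚ) : Prop :=
  ∀ (r : ℕ) (c : ℕ+ → Fin r), ∃ (k : Fin r) (x : κ → ℕ+),
    entriesIn (mulVecQ A x) {n | c n = k}

/-- `I(A) = {p ∈ βℕ : for every P ∈ p there is x over ℕ with all entries of Ax in P}`. -/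
def ISet {ι κ : Type} (A : ι → κ → ℚ) : Set (Ultrafilter ℕ+) :=
  {p | ∀ P ∈ p, ∃ x : κ → ℕ+, entriesIn (mulVecQ A x) P}

/-- `A i j` is the first (leftmost) nonzero entry of row `i`. -/
def FirstEntryAt {u v : ℕ} (A : Fin u → Fin v → ℚ) (i : Fin u) (j : Fin v) : Prop :=
  A i j ≠ 0 ∧ ∀ j' < j, A i j' = 0

/-- Definition 2.10(a): `A` is a first entries matrix. -/
def IsFirstEntries {u v : ℕ} (A : Fin u → Fin v → ℚ) : Prop :=
  (∀ i, ∃ j, A i j ≠ 0) ∧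
  (∀ i j, FirstEntryAt A i j → 0 < A i j) ∧
  (∀ i i' j, FirstEntryAt A i j → FirstEntryAt A i' j → A i j = A i' j)

/-- A first entries matrix is monic when all its first entries equal `1`. -/
def IsMonic {u v : ℕ} (A : Fin u → Fin v → ℚ) : Prop :=
  ∀ i j, FirstEntryAt A i j → A i j = 1

/-- Definition 2.10(b): `A` is a monic segmented first entries matrix: no row of `A`
is zero, `A` is row-finite, and there is an increasing sequence `α` with `α 0 = 0`
such that for each `n` the set of nonzero rows of the block of columns
`α n, …, α (n+1) - 1` is empty or is precisely the set of rows of a finite image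
partition regular monic first entries matrix. -/
def MonicSegmentedFE (A : ℕ → ℕ → ℚ) : Prop :=
  (∀ i, ∃ j, A i j ≠ 0) ∧ (∀ i, {j | A i j ≠ 0}.Finite) ∧
  ∃ α : ℕ → ℕ, α 0 = 0 ∧ StrictMono α ∧
    ∀ n, ∃ (u : ℕ) (F : Fin u → Fin (α (n+1) - α n) → ℚ),
      IPR F ∧ IsFirstEntries F ∧ IsMonic F ∧
      {row : Fin (α (n+1) - α n) → ℚ |
          row ≠ 0 ∧ ∃ i, row = fun t : Fin (α (n+1) - α n) => A i (α n + (t : ℕ))} = Set.range F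

/-!
A minimal idempotent `q` of `βS`, `S` a commutative monoid, is the image of a single ultrafilter on
`S ^ k` under every monomial map whose first nonzero exponent is `1`: prepending a variable `y₀`
amounts to replacing an ultrafilter on the remaining variables by an idempotent below the image of
`q` under `s ↦ (s, 1, …, 1)`, and minimality of `q` forces every monomial `y₀ * ⋯` to map it to `q`.
So each member of `q` contains, for a prescribed finite set of such monomials, all their values at
a suitable point, and the Galvin–Glazer argument chooses these points block after block with all
products across blocks in the given member of `q`.

Over `ℕ` with addition this shows that `I(A)` is nonempty. Since `I(A)` is a closed left ideal of
`(βℕ, ·)`, it contains a multiplicative minimal idempotent. A member `E i` of that ultrafilter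
contains the entries of some `Ax` by the definition of `I(A)`, and those of some `y^A` by the
multiplicative case.
-/

open Filter

attribute [local instance] Ultrafilter.mul Ultrafilter.semigroup

/-! ### Minimal idempotents in compact right topological semigroups -/

section CompactSemigroup

variable {M : Type*} [Semigroup M]

/-- A minimal idempotent of a semigroup: an idempotent that is minimal for the order
`f ≤ e ↔ f * e = f ∧ e * f = f` on idempotents. -/
def IsMinimalIdempotent (e : M) : Prop :=
  IsIdempotentElem e ∧ ∀ f : M, IsIdempotentElem f → f * e = f → e * f = f → f = e

theorem IsMinimalIdempotent.map_eq_of_le {N : Type*} [Semigroup N] {φ : M →ₙ* N} {e f : M}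
    (he : IsMinimalIdempotent (φ e)) (hf : IsIdempotentElem f) (hfe : f * e = f)
    (hef : e * f = f) : φ f = φ e :=
  he.2 _ (hf.map φ) (by rw [← map_mul, hfe]) (by rw [← map_mul, hef])

variable [TopologicalSpace M]

/-- Nonempty closed left ideals of a semigroup with a topology. -/
structure IsClosedLeftIdeal (L : Set M) : Prop where
  isClosed : IsClosed L
  nonempty : L.Nonempty
  mul_mem : ∀ a, ∀ b ∈ L, a * b ∈ L

variable [CompactSpace M]

theorem IsClosedLeftIdeal.exists_minimal_subset {L : Set M} (hL : IsClosedLeftIdeal L) :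
    ∃ N ⊆ L, Minimal IsClosedLeftIdeal N := by
  refine zorn_superset_nonempty {N : Set M | IsClosedLeftIdeal N} (fun c hc hchain hne ↦ ?_) L hL
  refine ⟨⋂₀ c, ⟨isClosed_sInter fun N hN ↦ (hc hN).isClosed, ?_, ?_⟩,
    fun N hN ↦ Set.sInter_subset_of_mem hN⟩
  · have := hne.to_subtype
    exact IsCompact.nonempty_sInter_of_directed_nonempty_isCompact_isClosed
      (IsChain.directedOn hchain.symm) (fun N hN ↦ (hc hN).nonempty)
      (fun N hN ↦ (hc hN).isClosed.isCompact) fun N hN ↦ (hc hN).isClosed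
  · exact fun a b hb N hN ↦ (hc hN).mul_mem a b (hb N hN)

variable [T2Space M]

theorem isClosedLeftIdeal_range_mul_right {f : M} (hf : Continuous (· * f)) :
    IsClosedLeftIdeal (Set.range (· * f)) where
  isClosed := (isCompact_range hf).isClosed
  nonempty := ⟨_, f, rfl⟩
  mul_mem := by
    rintro a _ ⟨b, rfl⟩
    exact ⟨a * b, mul_assoc a b f⟩

theorem isMinimalIdempotent_of_mem_minimal
    (hmul : ∀ f : M, Continuous (· * f)) {L : Set M} (hL : Minimal IsClosedLeftIdeal L) {e : M}
    (he : IsIdempotentElem e) (heL : e ∈ L) : IsMinimalIdempotent e := by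
  refine ⟨he, fun f hf hfe hef ↦ ?_⟩
  have hfL : f ∈ L := hfe ▸ hL.prop.mul_mem f e heL
  have hrange : Set.range (· * f) = L :=
    hL.eq_of_subset (isClosedLeftIdeal_range_mul_right (hmul f))
      (Set.range_subset_iff.2 fun a ↦ hL.prop.mul_mem a f hfL)
  obtain ⟨a, ha : a * f = e⟩ := hrange ▸ heL
  calc f = e * f := hef.symm
    _ = a * (f * f) := by rw [← ha, mul_assoc]
    _ = e := by rw [hf.eq, ha]

theorem IsClosedLeftIdeal.exists_isMinimalIdempotent_mem
    (hmul : ∀ f : M, Continuous (· * f)) {L : Set M} (hL : IsClosedLeftIdeal L) :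
    ∃ e ∈ L, IsMinimalIdempotent e := by
  obtain ⟨N, hNL, hN⟩ := hL.exists_minimal_subset
  obtain ⟨e, heN, he⟩ := exists_idempotent_in_compact_subsemigroup hmul N hN.prop.nonempty
    hN.prop.isClosed.isCompact fun a _ b hb ↦ hN.prop.mul_mem a b hb
  exact ⟨e, hNL heN, isMinimalIdempotent_of_mem_minimal hmul hN he heN⟩

theorem exists_isIdempotentElem_mem_le (hmul : ∀ f : M, Continuous (· * f)) {G : Set M}
    (hG : IsClosed G) (hne : G.Nonempty) (hGmul : ∀ a ∈ G, ∀ b ∈ G, a * b ∈ G) {e : M}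
    (he : IsIdempotentElem e) (hleft : ∀ a ∈ G, e * a ∈ G) (hright : ∀ a ∈ G, a * e ∈ G) :
    ∃ f ∈ G, IsIdempotentElem f ∧ f * e = f ∧ e * f = f := by
  have hGe : ∀ a ∈ (· * e) '' G, ∀ b ∈ (· * e) '' G, a * b ∈ (· * e) '' G := by
    rintro _ ⟨a, ha, rfl⟩ _ ⟨b, hb, rfl⟩
    exact ⟨a * e * b, hGmul _ (hright a ha) b hb, mul_assoc _ _ _⟩
  obtain ⟨_, ⟨a, ha, rfl⟩, hg⟩ := exists_idempotent_in_compact_subsemigroup hmul _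
    (hne.image (· * e)) (hG.isCompact.image (hmul e)) hGe
  have hae : a * e * e = a * e := by rw [mul_assoc, he.eq]
  refine ⟨e * (a * e), hleft _ (hright a ha), ?_, ?_, ?_⟩
  · calc e * (a * e) * (e * (a * e)) = e * (a * e * e * (a * e)) := by simp only [mul_assoc]
      _ = e * (a * e) := by rw [hae]; exact congrArg (e * ·) hg
  · rw [mul_assoc, hae]
  · rw [← mul_assoc, he.eq]

end CompactSemigroup

/-! ### Semigroups of ultrafilters -/

theorem continuous_ultrafilter_map {X Y : Type*} (h : X → Y) :
    Continuous (Ultrafilter.map h) :=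
  ultrafilterBasis_is_basis.continuous_iff.2 <| Set.forall_mem_range.2 fun s ↦
    ultrafilter_isOpen_basic (h ⁻¹' s)

theorem ultrafilter_map_map_of_leftInverse {X Y : Type*} {f : X → Y} {g : Y → X}
    (h : Function.LeftInverse g f) (p : Ultrafilter X) : (p.map f).map g = p := by
  rw [Ultrafilter.map_map, h.comp_eq_id, Ultrafilter.map_id]

theorem ultrafilter_map_map_of_forall_eq_one {X Y Z : Type*} [One Z] {f : X → Y} {g : Y → Z}
    (h : ∀ a, g (f a) = 1) (p : Ultrafilter X) : (p.map f).map g = pure 1 := by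
  rw [Ultrafilter.map_map, show g ∘ f = fun _ ↦ 1 from funext h]
  exact Ultrafilter.coe_inj.1 Filter.map_const

/-- The homomorphism `βX → βY` that extends a homomorphism `X → Y`. -/
def ultrafilterMapHom {X Y : Type*} [Mul X] [Mul Y] (h : X →ₙ* Y) :
    Ultrafilter X →ₙ* Ultrafilter Y where
  toFun := Ultrafilter.map h
  map_mul' p q := Ultrafilter.coe_inj.1 <| Filter.ext' fun P ↦ by
    change (∀ᶠ a in p, ∀ᶠ b in q, P (h (a * b))) ↔ ∀ᶠ a in p, ∀ᶠ b in q, P (h a * h b)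
    simp only [map_mul]

theorem ultrafilter_mul_pure_one {S : Type*} [MulOneClass S] (p : Ultrafilter S) :
    p * (pure 1 : Ultrafilter S) = p :=
  Ultrafilter.coe_inj.1 <| Filter.ext' fun P ↦ by simp [Ultrafilter.eventually_mul]

theorem ultrafilter_pure_one_mul {S : Type*} [MulOneClass S] (p : Ultrafilter S) :
    (pure 1 : Ultrafilter S) * p = p :=
  Ultrafilter.coe_inj.1 <| Filter.ext' fun P ↦ by simp [Ultrafilter.eventually_mul]

theorem exists_isMinimalIdempotent_ultrafilter_mem {S : Type*} [Semigroup S] {I : Set S}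
    (hne : I.Nonempty) (hI : ∀ a, ∀ b ∈ I, a * b ∈ I) :
    ∃ q : Ultrafilter S, I ∈ q ∧ IsMinimalIdempotent q := by
  have hL : IsClosedLeftIdeal {p : Ultrafilter S | I ∈ p} :=
    { isClosed := ultrafilter_isClosed_basic I
      nonempty := hne.elim fun a ha ↦ ⟨pure a, Ultrafilter.mem_pure.2 ha⟩
      mul_mem := fun p q hq ↦ (Ultrafilter.eventually_mul p q (· ∈ I)).2 <|
        Eventually.of_forall fun a ↦ Eventually.mono hq (hI a) }
  exact hL.exists_isMinimalIdempotent_mem Ultrafilter.continuous_mul_left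

/-! ### Products of values chosen along an idempotent ultrafilter -/

section GalvinGlazer

theorem eventually_and_eventually_mul_mem {S : Type*} [Semigroup S]
    {q : Ultrafilter S} (hq : IsIdempotentElem q) {D : Set S} (hD : D ∈ q) :
    ∀ᶠ a in q, a ∈ D ∧ ∀ᶠ b in q, a * b ∈ D := by
  have hD' : ∀ᶠ a in ↑(q * q), a ∈ D := by rwa [hq.eq]
  exact Eventually.and hD ((Ultrafilter.eventually_mul q q (· ∈ D)).1 hD')

variable {S : Type*} [CommMonoid S] {q : Ultrafilter S} {X : Type*}

theorem exists_finite_subset_and_mul_mem (hq : IsIdempotentElem q) {P : X → Set S}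
    (hfin : ∀ x, (P x).Finite) (hP : ∀ D ∈ q, ∃ x, P x ⊆ D) {D : Set S} (hD : D ∈ q) :
    ∃ x, ∃ D' ∈ q, D' ⊆ D ∧ P x ⊆ D ∧ ∀ a ∈ P x, ∀ b ∈ D', a * b ∈ D := by
  obtain ⟨x, hx⟩ := hP _ (eventually_and_eventually_mul_mem hq hD)
  refine ⟨x, {b | b ∈ D ∧ ∀ a ∈ P x, a * b ∈ D}, ?_, fun b hb ↦ hb.1, fun a ha ↦ (hx ha).1,
    fun a ha b hb ↦ hb.2 a ha⟩
  exact Eventually.and hD ((eventually_all_finite (hfin x)).2 fun a ha ↦ (hx ha).2)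

theorem prod_mem_of_antitone_of_mul_mem {D P : ℕ → Set S} (hD : Antitone D)
    (hPD : ∀ n, P n ⊆ D n) (hmul : ∀ n, ∀ a ∈ P n, ∀ b ∈ D (n + 1), a * b ∈ D n)
    {t : Finset ℕ} (ht : t.Nonempty) {c : ℕ → S} (hc : ∀ n ∈ t, c n ∈ P n) {m : ℕ}
    (hm : ∀ n ∈ t, m ≤ n) : ∏ n ∈ t, c n ∈ D m := by
  induction t using Finset.induction_on_min generalizing m with
  | empty => simp at ht
  | insert a t hat ih =>
    rw [Finset.prod_insert fun ha ↦ (hat a ha).false]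
    refine hD (hm a (Finset.mem_insert_self a t)) ?_
    have hca : c a ∈ P a := hc a (Finset.mem_insert_self a t)
    obtain rfl | ht' := t.eq_empty_or_nonempty
    · simpa using hPD a hca
    · exact hmul a _ hca _
        (ih ht' (fun n hn ↦ hc n (Finset.mem_insert_of_mem hn)) fun n hn ↦ hat n hn)

theorem exists_seq_prod_mem_of_isIdempotentElem (hq : IsIdempotentElem q) {B : Set S}
    (hB : B ∈ q) {P : ℕ → X → Set S} (hfin : ∀ n x, (P n x).Finite)
    (hP : ∀ n, ∀ D ∈ q, ∃ x, P n x ⊆ D) :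
    ∃ x : ℕ → X, ∀ t : Finset ℕ, t.Nonempty →
      ∀ c : ℕ → S, (∀ n ∈ t, c n ∈ P n (x n)) → ∏ n ∈ t, c n ∈ B := by
  choose x next hnext hsub hPsub hmul using fun n (D : {D // D ∈ q}) ↦
    exists_finite_subset_and_mul_mem hq (hfin n) (hP n) D.2
  let D : ℕ → {D // D ∈ q} := fun n ↦ n.rec ⟨B, hB⟩ fun n D ↦ ⟨next n D, hnext n D⟩
  exact ⟨fun n ↦ x n (D n), fun t ht c hc ↦
    prod_mem_of_antitone_of_mul_mem (D := fun n ↦ (D n).1) (m := 0)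
      (antitone_nat_of_succ_le fun n ↦ hsub n (D n)) (fun n ↦ hPsub n (D n))
      (fun n ↦ hmul n (D n)) ht hc fun n _ ↦ n.zero_le⟩

end GalvinGlazer

/-! ### Monomials with monic exponent vectors -/

section Monomial

variable {S κ : Type*} [CommMonoid S]

/-- The monomial map `y ↦ ∏ j ∈ s, y j ^ l j` with exponent vector `l` in the variables from `s`. -/
def monomialHom (S : Type*) {κ : Type*} [CommMonoid S] (s : Finset κ) (l : κ → ℕ) :
    (κ → S) →* S where
  toFun y := ∏ j ∈ s, y j ^ l j
  map_one' := by simp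
  map_mul' y z := by simp only [Pi.mul_apply, mul_pow, Finset.prod_mul_distrib]

theorem monomialHom_apply (s : Finset κ) (l : κ → ℕ) (y : κ → S) :
    monomialHom S s l y = ∏ j ∈ s, y j ^ l j := rfl

theorem monomialHom_congr {s : Finset κ} {l l' : κ → ℕ} {y y' : κ → S}
    (hl : ∀ j ∈ s, l j = l' j) (hy : ∀ j ∈ s, y j = y' j) :
    monomialHom S s l y = monomialHom S s l' y' :=
  Finset.prod_congr rfl fun j hj ↦ by rw [hl j hj, hy j hj]

section DecidableEq

variable [DecidableEq κ] {s : Finset κ} {a : κ}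

theorem monomialHom_insert_apply (ha : a ∉ s) (l : κ → ℕ) (y : κ → S) :
    monomialHom S (insert a s) l y = y a ^ l a * monomialHom S s l y :=
  Finset.prod_insert ha

theorem monomialHom_mulSingle_of_notMem (ha : a ∉ s) (l : κ → ℕ) (c : S) :
    monomialHom S s l (Pi.mulSingle a c) = 1 :=
  Finset.prod_eq_one fun j hj ↦ by
    rw [Pi.mulSingle_eq_of_ne (ne_of_mem_of_not_mem hj ha), one_pow]

theorem monomialHom_insert_mulSingle (ha : a ∉ s) {l : κ → ℕ} (hl : l a = 1) (c : S) :
    monomialHom S (insert a s) l (Pi.mulSingle a c) = c := by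
  rw [monomialHom_insert_apply ha, monomialHom_mulSingle_of_notMem ha, hl, Pi.mulSingle_eq_same,
    pow_one, mul_one]

theorem monomialHom_single (ha : a ∈ s) (y : κ → S) :
    monomialHom S s (Pi.single a 1) y = y a := by
  rw [monomialHom_apply, Finset.prod_eq_single_of_mem a ha fun j _ hja ↦ by
    rw [Pi.single_eq_of_ne hja, pow_zero], Pi.single_eq_same, pow_one]

end DecidableEq

variable [LinearOrder κ]

/-- The row `l` is monic on the finite set `s` of columns: its first nonzero entry in `s` exists
and equals `1`. -/
def MonicOn (s : Finset κ) (l : κ → ℕ) : Prop :=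
  ∃ j ∈ s, l j = 1 ∧ ∀ k ∈ s, k < j → l k = 0

theorem MonicOn.congr {s : Finset κ} {l l' : κ → ℕ} (hl : MonicOn s l)
    (h : ∀ j ∈ s, l j = l' j) : MonicOn s l' := by
  obtain ⟨j, hj, hj1, hlt⟩ := hl
  exact ⟨j, hj, h j hj ▸ hj1, fun k hk hkj ↦ h k hk ▸ hlt k hk hkj⟩

theorem monicOn_single {s : Finset κ} {j : κ} (hj : j ∈ s) : MonicOn s (Pi.single j 1) :=
  ⟨j, hj, Pi.single_eq_same j 1, fun _ _ hkj ↦ Pi.single_eq_of_ne hkj.ne 1⟩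

theorem MonicOn.eq_one_or_of_insert {s : Finset κ} {a : κ} (ha : ∀ k ∈ s, a < k) {l : κ → ℕ}
    (hl : MonicOn (insert a s) l) : l a = 1 ∨ l a = 0 ∧ MonicOn s l := by
  obtain ⟨j, hj, hj1, hlt⟩ := hl
  obtain rfl | hjs := Finset.mem_insert.1 hj
  · exact .inl hj1
  · exact .inr ⟨hlt a (Finset.mem_insert_self a s) (ha j hjs), j, hjs, hj1,
      fun k hk ↦ hlt k (Finset.mem_insert_of_mem hk)⟩

variable {q : Ultrafilter S}

theorem exists_map_monomialHom_insert_eq (hq : IsMinimalIdempotent q) {s : Finset κ} {a : κ}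
    (ha : ∀ k ∈ s, a < k) {σ : Ultrafilter (κ → S)}
    (hσ : ∀ l, MonicOn s l → σ.map (monomialHom S s l) = q) :
    ∃ τ : Ultrafilter (κ → S),
      ∀ l, MonicOn (insert a s) l → τ.map (monomialHom S (insert a s) l) = q := by
  have has : a ∉ s := fun h ↦ (ha a h).false
  let φ (t : Finset κ) (l : κ → ℕ) := ultrafilterMapHom (monomialHom S t l).toMulHom
  let e : Ultrafilter (κ → S) := ultrafilterMapHom (MonoidHom.mulSingle (fun _ ↦ S) a).toMulHom q
  have hφe_one (l : κ → ℕ) : φ s l e = pure 1 :=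
    ultrafilter_map_map_of_forall_eq_one (monomialHom_mulSingle_of_notMem has l) q
  have hφe (l : κ → ℕ) (hl : l a = 1) : φ (insert a s) l e = q :=
    ultrafilter_map_map_of_leftInverse (monomialHom_insert_mulSingle has hl) q
  let G : Set (Ultrafilter (κ → S)) := {τ | ∀ l, MonicOn s l → φ s l τ = q}
  have hG : IsClosed G := by
    simp only [G, Set.ofPred_forall]
    exact isClosed_iInter fun l ↦ isClosed_iInter fun _ ↦
      isClosed_singleton.preimage (continuous_ultrafilter_map _)
  obtain ⟨τ, hτG, hτ, hτe, heτ⟩ : ∃ τ ∈ G, IsIdempotentElem τ ∧ τ * e = τ ∧ e * τ = τ := by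
    refine exists_isIdempotentElem_mem_le Ultrafilter.continuous_mul_left hG ⟨σ, hσ⟩
      (fun τ hτ τ' hτ' l hl ↦ ?_) (hq.1.map _) (fun τ hτ l hl ↦ ?_) (fun τ hτ l hl ↦ ?_)
    · rw [map_mul, hτ l hl, hτ' l hl, hq.1.eq]
    · rw [map_mul, hτ l hl, hφe_one, ultrafilter_pure_one_mul]
    · rw [map_mul, hτ l hl, hφe_one, ultrafilter_mul_pure_one]
  refine ⟨τ, fun l hl ↦ ?_⟩
  obtain hla | ⟨hla, hls⟩ := hl.eq_one_or_of_insert ha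
  · have hmin : IsMinimalIdempotent (φ (insert a s) l e) := (hφe l hla).symm ▸ hq
    exact (hmin.map_eq_of_le hτ hτe heτ).trans (hφe l hla)
  · have : monomialHom S (insert a s) l = monomialHom S s l := by
      ext y
      rw [monomialHom_insert_apply has, hla, pow_zero, one_mul]
    rw [this]
    exact hτG l hls

theorem IsMinimalIdempotent.exists_map_monomialHom_eq (hq : IsMinimalIdempotent q)
    (s : Finset κ) :
    ∃ σ : Ultrafilter (κ → S), ∀ l, MonicOn s l → σ.map (monomialHom S s l) = q := by
  induction s using Finset.induction_on_min with
  | empty => exact ⟨pure 1, fun l ⟨j, hj, _⟩ ↦ absurd hj (Finset.notMem_empty j)⟩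
  | insert a s ha ih => exact ih.elim fun σ hσ ↦ exists_map_monomialHom_insert_eq hq ha hσ

theorem IsMinimalIdempotent.exists_forall_monomialHom_mem (hq : IsMinimalIdempotent q)
    (s : Finset κ) {R : Set (κ → ℕ)} (hR : R.Finite) (hmonic : ∀ l ∈ R, MonicOn s l) {D : Set S}
    (hD : D ∈ q) : ∃ x : κ → S, ∀ l ∈ R, monomialHom S s l x ∈ D := by
  obtain ⟨σ, hσ⟩ := hq.exists_map_monomialHom_eq s
  refine Eventually.exists (f := (σ : Filter (κ → S))) ((eventually_all_finite hR).2 fun l hl ↦ ?_)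
  exact Ultrafilter.mem_map.1 ((hσ l (hmonic l hl)).symm ▸ hD)

theorem IsMinimalIdempotent.exists_forall_prod_monomialHom_mem (hq : IsMinimalIdempotent q)
    {B : Set S} (hB : B ∈ q) {s : ℕ → Finset κ} {b : κ → ℕ} (hb : ∀ n, ∀ j ∈ s n, b j = n)
    {R : ℕ → Set (κ → ℕ)} (hR : ∀ n, (R n).Finite) (hmonic : ∀ n, ∀ l ∈ R n, MonicOn (s n) l) :
    ∃ y : κ → S, ∀ t : Finset ℕ, t.Nonempty → ∀ l : ℕ → κ → ℕ, (∀ n ∈ t, l n ∈ R n) →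
      ∏ n ∈ t, monomialHom S (s n) (l n) y ∈ B := by
  obtain ⟨x, hx⟩ := exists_seq_prod_mem_of_isIdempotentElem hq.1 hB
    (P := fun n x ↦ (fun l ↦ monomialHom S (s n) l x) '' R n) (fun n _ ↦ (hR n).image _)
    fun n D hD ↦ (hq.exists_forall_monomialHom_mem (s n) (hR n) (hmonic n) hD).imp
      fun _ h ↦ Set.image_subset_iff.2 h
  refine ⟨fun j ↦ x (b j) j, fun t ht l hl ↦ hx t ht _ fun n hn ↦ ⟨l n, hl n hn, ?_⟩⟩
  exact monomialHom_congr (fun _ _ ↦ rfl) fun j hj ↦ by rw [hb n j hj]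

end Monomial

/-! ### Segmented matrices -/

/-- The matrix `A` is segmented into finite column blocks `s 0, s 1, …`, where `b j` is the number
of the block that contains the column `j`, such that each nonzero row of a block is monic. This is
the form in which the argument uses `MonicSegmentedFE`. -/
structure IsMonicSegmented {ι κ : Type*} [LinearOrder κ] (s : ℕ → Finset κ) (b : κ → ℕ)
    (A : ι → κ → ℕ) : Prop where
  mem_block_iff : ∀ n j, j ∈ s n ↔ b j = n
  exists_ne_zero : ∀ i, ∃ j, A i j ≠ 0
  finite_support : ∀ i, (A i).support.Finite
  finite_block_rows : ∀ n, (Set.range fun i ↦ Set.indicator (s n) (A i)).Finite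
  monicOn : ∀ i n, (∃ j ∈ s n, A i j ≠ 0) → MonicOn (s n) (A i)

namespace IsMonicSegmented

variable {ι κ : Type*} [LinearOrder κ] {s : ℕ → Finset κ} {b : κ → ℕ} {A : ι → κ → ℕ}

theorem finprod_pow_eq_prod_monomialHom {S : Type*} [CommMonoid S]
    (hA : IsMonicSegmented s b A) (y : κ → S) (i : ι) :
    ∏ᶠ j, y j ^ A i j =
      ∏ n ∈ (hA.finite_support i).toFinset.image b, monomialHom S (s n) (A i) y := by
  have hdisj : Pairwise (Function.onFun Disjoint s) := fun m n hmn ↦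
    Finset.disjoint_left.2 fun j hm hn ↦
      hmn (((hA.mem_block_iff m j).1 hm).symm.trans ((hA.mem_block_iff n j).1 hn))
  simp only [monomialHom_apply]
  rw [← Finset.prod_biUnion (hdisj.set_pairwise _)]
  refine finprod_eq_prod_of_mulSupport_subset _ fun j hj ↦ ?_
  have hj0 : A i j ≠ 0 := fun h0 ↦ hj (by simp only [h0, pow_zero])
  exact Finset.mem_biUnion.2 ⟨b j, Finset.mem_image_of_mem b (by simpa using hj0),
    (hA.mem_block_iff _ j).2 rfl⟩

theorem exists_finprod_pow_mem {S : Type*} [CommMonoid S] {q : Ultrafilter S}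
    (hA : IsMonicSegmented s b A) (hq : IsMinimalIdempotent q) {B : Set S} (hB : B ∈ q) :
    ∃ y : κ → S, (∀ j, y j ∈ B) ∧ ∀ i, ∏ᶠ j, y j ^ A i j ∈ B := by
  let rows n := {l | l ∈ Set.range (fun i ↦ Set.indicator (s n) (A i)) ∧ MonicOn (s n) l}
  let units n := (fun j ↦ (Pi.single j 1 : κ → ℕ)) '' s n
  obtain ⟨y, hy⟩ := hq.exists_forall_prod_monomialHom_mem hB (s := s) (b := b)
    (R := fun n ↦ rows n ∪ units n) (fun n j ↦ (hA.mem_block_iff n j).1)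
    (fun n ↦ ((hA.finite_block_rows n).subset fun l hl ↦ hl.1).union
      ((s n).finite_toSet.image _)) (by
        rintro n l (hl | ⟨j, hj, rfl⟩)
        · exact hl.2
        · exact monicOn_single hj)
  refine ⟨y, fun j ↦ ?_, fun i ↦ ?_⟩
  · have hj : j ∈ s (b j) := (hA.mem_block_iff _ j).2 rfl
    have := hy {b j} (Finset.singleton_nonempty _) (fun _ ↦ Pi.single j 1) fun n hn ↦
      .inr ⟨j, Finset.mem_singleton.1 hn ▸ hj, rfl⟩
    rwa [Finset.prod_singleton, monomialHom_single hj] at this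
  · have hrow (n) : ∀ j ∈ s n, Set.indicator (s n) (A i) j = A i j := fun j hj ↦
      Set.indicator_of_mem (Finset.mem_coe.2 hj) _
    rw [hA.finprod_pow_eq_prod_monomialHom, ← Finset.prod_congr rfl fun n _ ↦
      monomialHom_congr (hrow n) fun _ _ ↦ rfl]
    refine hy _ ?_ (fun n ↦ Set.indicator (s n) (A i)) fun n hn ↦ .inl ⟨⟨i, rfl⟩, ?_⟩
    · exact ((Set.Finite.toFinset_nonempty _).2 (hA.exists_ne_zero i)).image b
    · obtain ⟨j, hj, rfl⟩ := Finset.mem_image.1 hn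
      exact (hA.monicOn i _ ⟨j, (hA.mem_block_iff _ j).2 rfl, by simpa using hj⟩).congr
        fun k hk ↦ (hrow _ k hk).symm

end IsMonicSegmented

theorem exists_forall_mem_Ico_iff_eq {α : ℕ → ℕ} (h0 : α 0 = 0) (hα : StrictMono α) :
    ∃ b : ℕ → ℕ, ∀ n j, j ∈ Finset.Ico (α n) (α (n + 1)) ↔ b j = n := by
  have hcover : ⋃ n, Set.Ico (α n) (α (n + 1)) = Set.univ := by
    have h := iUnion_Ico_map_succ_eq_Ici (f := α) (fun n ↦ hα.monotone bot_le)
      hα.not_bddAbove_range_of_wellFoundedLT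
    simpa [h0] using h
  choose b hb using fun j ↦ Set.mem_iUnion.1 (hcover ▸ Set.mem_univ j)
  refine ⟨b, fun n j ↦ ⟨fun hj ↦ ?_, fun hj ↦ Finset.mem_Ico.2 (hj ▸ hb j)⟩⟩
  by_contra hne
  exact Set.disjoint_left.1 (hα.monotone.pairwise_disjoint_on_Ico_succ hne) (hb j)
    (Finset.mem_Ico.1 hj)

theorem IsFirstEntries.exists_eq_one {u v : ℕ} {F : Fin u → Fin v → ℚ} (hF : IsFirstEntries F)
    (hmonic : IsMonic F) (k : Fin u) : ∃ t, F k t = 1 ∧ ∀ t' < t, F k t' = 0 := by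
  obtain ⟨t, ht, hmin⟩ := wellFounded_lt.has_min {t | F k t ≠ 0} (hF.1 k)
  have hlt : ∀ t' < t, F k t' = 0 := fun t' h ↦ not_not.1 fun h' ↦ hmin t' h' h
  exact ⟨t, hmonic k t ⟨ht, hlt⟩, hlt⟩

theorem monicOn_Ico {l : ℕ → ℕ} {a c : ℕ} {t : Fin (c - a)} (ht : l (a + t) = 1)
    (hlt : ∀ t' < t, l (a + t') = 0) : MonicOn (Finset.Ico a c) l := by
  refine ⟨a + t, Finset.mem_Ico.2 (by omega), ht, fun k hk hkt ↦ ?_⟩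
  obtain ⟨hak, _⟩ := Finset.mem_Ico.1 hk
  have := hlt ⟨k - a, by omega⟩ (show k - a < t by omega)
  rwa [Nat.add_sub_cancel' hak] at this

theorem finite_range_indicator_Ico {ι : Type*} {A : ι → ℕ → ℕ} {a c : ℕ}
    (hfin : (Set.range fun i (t : Fin (c - a)) ↦ (A i (a + t) : ℚ)).Finite) :
    (Set.range fun i ↦ Set.indicator (Finset.Ico a c) (A i)).Finite := by
  have hfactor : (fun i ↦ Set.indicator (Finset.Ico a c) (A i)).FactorsThrough
      fun i (t : Fin (c - a)) ↦ (A i (a + t) : ℚ) := by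
    refine fun i i' h ↦ Set.indicator_congr fun j hj ↦ ?_
    obtain ⟨haj, hjc⟩ := Finset.mem_Ico.1 (Finset.mem_coe.1 hj)
    have := congrFun h ⟨j - a, by omega⟩
    simpa only [Nat.add_sub_cancel' haj, Nat.cast_inj] using this
  obtain ⟨e, he⟩ := (Function.factorsThrough_iff _).1 hfactor
  rw [he, Set.range_comp]
  exact hfin.image e

theorem MonicSegmentedFE.exists_isMonicSegmented {A : ℕ → ℕ → ℕ}
    (hA : MonicSegmentedFE fun i j ↦ (A i j : ℚ)) : ∃ s b, IsMonicSegmented s b A := by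
  obtain ⟨hne, hfin, α, hα0, hα, hblock⟩ := hA
  obtain ⟨b, hb⟩ := exists_forall_mem_Ico_iff_eq hα0 hα
  refine ⟨fun n ↦ Finset.Ico (α n) (α (n + 1)), b, hb, by simpa using hne,
    by simpa [Function.support] using hfin, fun n ↦ ?_, fun i n ⟨j, hj, hAj⟩ ↦ ?_⟩ <;>
  obtain ⟨u, F, -, hF, hmonic, hrows⟩ := hblock n
  · refine finite_range_indicator_Ico (((Set.finite_range F).insert 0).subset ?_)
    rintro _ ⟨i, rfl⟩
    exact or_iff_not_imp_left.2 fun hrow ↦ hrows ▸ ⟨hrow, i, rfl⟩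
  · obtain ⟨hαj, hjα⟩ := Finset.mem_Ico.1 hj
    have hrow : (fun t : Fin (α (n + 1) - α n) ↦ (A i (α n + t) : ℚ)) ≠ 0 := fun h0 ↦ hAj <| by
      simpa [Nat.add_sub_cancel' hαj] using congrFun h0 ⟨j - α n, by omega⟩
    obtain ⟨k, hk⟩ := hrows.subset ⟨hrow, i, rfl⟩
    obtain ⟨t, ht, hlt⟩ := hF.exists_eq_one hmonic k
    simp only [hk] at ht hlt
    exact monicOn_Ico (mod_cast ht) (mod_cast hlt)

/-! ### The closed left ideal `I(A)` of `(βℕ, ·)` -/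

section ISet

variable {ι κ : Type}

theorem isClosed_ISet (A : ι → κ → ℚ) : IsClosed (ISet A) := by
  have hISet : ISet A = ⋂ P ∈ {P : Set ℕ+ | ¬∃ x, entriesIn (mulVecQ A x) P},
      {p : Ultrafilter ℕ+ | P ∈ p}ᶜ := by
    ext p
    simp only [ISet, Set.mem_iInter]
    exact forall_congr' fun P ↦ not_imp_not.symm
  rw [hISet]
  exact isClosed_biInter fun P _ ↦ (ultrafilter_isOpen_basic P).isClosed_compl

theorem mulVecQ_mul (A : ι → κ → ℚ) (m : ℕ+) (x : κ → ℕ+) (i : ι) :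
    mulVecQ A (fun j ↦ m * x j) i = m * mulVecQ A x i := by
  simp only [mulVecQ, mul_finsum, PNat.mul_coe, Nat.cast_mul]
  exact finsum_congr fun j ↦ by ring

theorem mul_mem_ISet {A : ι → κ → ℚ} (p : Ultrafilter ℕ+) {q : Ultrafilter ℕ+}
    (hq : q ∈ ISet A) : p * q ∈ ISet A := by
  intro P hP
  obtain ⟨m, hm⟩ := ((Ultrafilter.eventually_mul p q (· ∈ P)).1 hP).exists
  obtain ⟨x, hx⟩ := hq _ hm
  refine ⟨fun j ↦ m * x j, fun i ↦ ?_⟩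
  obtain ⟨n, hn, hxn⟩ := hx i
  exact ⟨m * n, hn, by rw [mulVecQ_mul, hxn, PNat.mul_coe, Nat.cast_mul]⟩

theorem mulVecQ_natCast (A : ι → κ → ℕ) (x : κ → ℕ+) (i : ι) :
    mulVecQ (fun i j ↦ (A i j : ℚ)) x i = (∑ᶠ j, A i j * (x j : ℕ) : ℕ) := by
  have := (Nat.castAddMonoidHom ℚ).map_finsum_of_injective Nat.cast_injective
    fun j ↦ A i j * (x j : ℕ)
  simpa [mulVecQ] using this.symm

theorem toAdd_finprod {X M : Type*} [AddCommMonoid M] (f : X → Multiplicative M) :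
    (∏ᶠ j, f j).toAdd = ∑ᶠ j, (f j).toAdd := by
  by_cases h : f.mulSupport.Finite
  · rw [finprod_eq_prod_of_mulSupport_subset f h.coe_toFinset.superset, toAdd_prod]
    exact (finsum_eq_sum_of_support_subset (M := M) _ h.coe_toFinset.superset).symm
  · rw [finprod_of_infinite_mulSupport h, toAdd_one]
    exact (finsum_of_infinite_support (M := M) h).symm

theorem IsMonicSegmented.nonempty_ISet [LinearOrder κ] {s : ℕ → Finset κ} {b : κ → ℕ}
    {A : ι → κ → ℕ} (hA : IsMonicSegmented s b A) : (ISet fun i j ↦ (A i j : ℚ)).Nonempty := by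
  let Pos : Set (Multiplicative ℕ) := {m | 0 < m.toAdd}
  obtain ⟨q, hPos, hq⟩ := exists_isMinimalIdempotent_ultrafilter_mem (I := Pos)
    ⟨.ofAdd 1, Nat.one_pos⟩ fun a _ hb ↦ Nat.add_pos_right a.toAdd hb
  let toPNat (m : Multiplicative ℕ) : ℕ+ := m.toAdd.toPNat'
  have coe_toPNat {m : Multiplicative ℕ} (hm : m ∈ Pos) : (toPNat m : ℕ) = m.toAdd :=
    Nat.succ_pred_eq_of_pos hm
  refine ⟨q.map toPNat, fun P hP ↦ ?_⟩
  obtain ⟨y, hy, hrow⟩ := hA.exists_finprod_pow_mem hq (inter_mem (Ultrafilter.mem_map.1 hP) hPos)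
  refine ⟨fun j ↦ toPNat (y j), fun i ↦ ⟨_, (hrow i).1, ?_⟩⟩
  rw [mulVecQ_natCast, coe_toPNat (hrow i).2, toAdd_finprod]
  simp only [coe_toPNat (hy _).2, toAdd_pow, smul_eq_mul]

theorem IsMonicSegmented.isClosedLeftIdeal_ISet [LinearOrder κ] {s : ℕ → Finset κ} {b : κ → ℕ}
    {A : ι → κ → ℕ} (hA : IsMonicSegmented s b A) :
    IsClosedLeftIdeal (ISet fun i j ↦ (A i j : ℚ)) :=
  ⟨isClosed_ISet _, hA.nonempty_ISet, fun p _ hq ↦ mul_mem_ISet p hq⟩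

end ISet

theorem stmt_11_general {ι κ : Type} {τ : Type*} [LinearOrder κ] [Finite τ]
    {s : ℕ → Finset κ} {b : κ → ℕ} {A : ι → κ → ℕ} (hA : IsMonicSegmented s b A)
    {E : τ → Set ℕ+} (hE : ∀ n, ∃ i, n ∈ E i) :
    ∃ (i : τ) (x y : κ → ℕ+),
      (∀ i', ∃ n ∈ E i, (∑ᶠ j, A i' j * (x j : ℕ)) = (n : ℕ)) ∧
      (∀ i', (∏ᶠ j, (y j) ^ (A i' j)) ∈ E i) := by
  obtain ⟨q, hqI, hq⟩ :=
    hA.isClosedLeftIdeal_ISet.exists_isMinimalIdempotent_mem Ultrafilter.continuous_mul_left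
  obtain ⟨i, hi⟩ : ∃ i, E i ∈ q :=
    Ultrafilter.eventually_exists_iff.1 (Eventually.of_forall hE)
  obtain ⟨x, hx⟩ := hqI _ hi
  obtain ⟨y, -, hy⟩ := hA.exists_finprod_pow_mem hq hi
  refine ⟨i, x, y, fun i' ↦ ?_, hy⟩
  obtain ⟨n, hn, hxn⟩ := hx i'
  exact ⟨n, hn, by rw [mulVecQ_natCast] at hxn; exact_mod_cast hxn⟩

/-- Theorem 3.6: if `A` is an `ω×ω` monic segmented first entries
matrix with entries from `ω` and `ℕ = E_1 ∪ … ∪ E_r`, then there are `i` and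
`x, y ∈ ℕ^ω` such that all entries of `Ax` and all entries of `y^A`
(where `(y^A)_j = ∏_t y_t ^ A j t`) lie in `E_i`. -/
theorem stmt_11 (A : ℕ → ℕ → ℕ)
    (hA : MonicSegmentedFE fun i j => (A i j : ℚ))
    (r : ℕ) (E : Fin r → Set ℕ+) (hE : ∀ n : ℕ+, ∃ i, n ∈ E i) :
    ∃ (i : Fin r) (x y : ℕ → ℕ+),
      (∀ i' : ℕ, ∃ n ∈ E i, (∑ᶠ j, A i' j * (x j : ℕ)) = (n : ℕ)) ∧
      (∀ i' : ℕ, (∏ᶠ j, (y j) ^ (A i' j)) ∈ E i) := by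
  obtain ⟨_, _, hA'⟩ := hA.exists_isMonicSegmented
  exact stmt_11_general hA' hE
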